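/- Let n ≥ 2, λ > 0, and let ξ ~ N(ν, λ²I_n) be an n-dimensional Gaussian random vector with mean ν = (‖ν‖, 0, 0, …, 0)ᵀ. Then the covariance matrix of ξ/‖ξ‖ is the diagonal matrix cov(ξ/‖ξ‖) = blockdiag( f_n(‖ν‖/λ), g_n(‖ν‖/λ)·I_{n−1} ). -/

import Mathlib

open MeasureTheory ProbabilityTheory Matrix

noncomputable section

def euclNorm {n : ℕ} (x : Fin n → ℝ) : ℝ := Real.sqrt (∑ i, x i ^ 2)

def centerMat (n : ℕ) : Matrix (Fin n) (Fin n) ℝ :=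
  1 - (n : ℝ)⁻¹ • Matrix.of (fun _ _ => (1 : ℝ))

def chi {n : ℕ} (z : Fin n → ℝ) : Fin n → ℝ :=
  (euclNorm ((centerMat n).mulVec z))⁻¹ • (centerMat n).mulVec z

def meanVec {Ω : Type*} [MeasurableSpace Ω] (P : Measure Ω) {n : ℕ}
    (X : Ω → Fin n → ℝ) : Fin n → ℝ := fun i => ∫ ω, X ω i ∂P

def covMatrix {Ω : Type*} [MeasurableSpace Ω] (P : Measure Ω) {n : ℕ}
    (X : Ω → Fin n → ℝ) : Matrix (Fin n) (Fin n) ℝ :=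
  Matrix.of fun i j => ∫ ω, (X ω i - meanVec P X i) * (X ω j - meanVec P X j) ∂P

def MRL {Ω : Type*} [MeasurableSpace Ω] (P : Measure Ω) {n : ℕ}
    (X : Ω → Fin n → ℝ) : ℝ := euclNorm (meanVec P X)

def MD {Ω : Type*} [MeasurableSpace Ω] (P : Measure Ω) {n : ℕ}
    (X : Ω → Fin n → ℝ) : Fin n → ℝ := (euclNorm (meanVec P X))⁻¹ • meanVec P X

def stdGaussianPi (n : ℕ) : Measure (Fin n → ℝ) :=
  Measure.pi fun _ => gaussianReal 0 1

def IsGaussianVec {Ω : Type*} [MeasurableSpace Ω] (P : Measure Ω) {n : ℕ}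
    (Z : Ω → Fin n → ℝ) (m : Fin n → ℝ) (S : Matrix (Fin n) (Fin n) ℝ) : Prop :=
  ∃ A : Matrix (Fin n) (Fin n) ℝ, A * Aᵀ = S ∧
    Measure.map Z P = Measure.map (fun x => m + A.mulVec x) (stdGaussianPi n)

def ascFact (a : ℝ) (k : ℕ) : ℝ := ∏ i ∈ Finset.range k, (a + i)

def kummerM (a b z : ℝ) : ℝ := ∑' k : ℕ, (ascFact a k / ascFact b k) * z ^ k / (Nat.factorial k)

def varrho (m : ℕ) (x : ℝ) : ℝ :=
  (Real.Gamma (((m : ℝ) + 1) / 2) / (Real.sqrt 2 * Real.Gamma (((m : ℝ) + 2) / 2))) * x *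
    kummerM (1 / 2) (((m : ℝ) + 2) / 2) (-x ^ 2 / 2)

def fFun (m : ℕ) (x : ℝ) : ℝ :=
  1 - (((m : ℝ) - 1) / m) * kummerM 1 ((m : ℝ) / 2 + 1) (-x ^ 2 / 2) - (varrho m x) ^ 2

def gFun (m : ℕ) (x : ℝ) : ℝ :=
  (1 / (m : ℝ)) * kummerM 1 ((m : ℝ) / 2 + 1) (-x ^ 2 / 2)

def Vmat (n : ℕ) : Matrix (Fin n) (Fin n) ℝ :=
  Matrix.of fun i j =>
    if (j : ℕ) = n - 1 then 1 / Real.sqrt n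
    else if (i : ℕ) = (j : ℕ) then
      ((n : ℝ) - 1 - (j : ℕ)) / Real.sqrt (((n : ℝ) - 1 - (j : ℕ)) * ((n : ℝ) - (j : ℕ)))
    else if (j : ℕ) < (i : ℕ) then
      -(1 / Real.sqrt (((n : ℝ) - 1 - (j : ℕ)) * ((n : ℝ) - (j : ℕ))))
    else 0

def projMat (n : ℕ) : Matrix (Fin n) (Fin n) ℝ :=
  Matrix.diagonal fun i => if (i : ℕ) < n - 1 then 1 else 0

def embedZero {n : ℕ} (v : Fin (n - 1) → ℝ) : Fin n → ℝ :=
  fun i => if h : (i : ℕ) < n - 1 then v ⟨i, h⟩ else 0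

def Ximat (n : ℕ) (r : ℝ) : Matrix (Fin n) (Fin n) ℝ :=
  Matrix.of fun i j => if i = j then 1 else r

def stdNormCDF (x : ℝ) : ℝ := (gaussianReal 0 1 (Set.Iic x)).toReal

def thetaTilde : Fin 2 → ℝ := ![Real.sqrt 2 / 2, -(Real.sqrt 2 / 2)]

/-!
The power `(|w|²/2)^(-a)` is the Laplace integral `Γ(a)⁻¹ ∫ t^(a-1) exp (-t|w|²/2) dt`, and
tilting the law `N(m, I)` of `w` by `exp (-t|w|²/2)` gives, up to an explicit factor,
`N(m/(1+t), I/(1+t))`. So the moments of `w/|w|` become `t`-integrals, which the odds substitution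
`t = s/(1-s)` turns into Euler's integral for Kummer's function. With `a = 1/2` this is the mean;
with `a = 1` and the recurrence raising `b` in `M(1, b, z)` it is the second moment
`g·I + (1 - n g)·uuᵀ`, where `u = m/|m|` and `g = gFun n |m|`. The law `N(ν, λ²I)` is brought to
`N(ν/λ, I)` by scaling, which the projection ignores, and by the rotation invariance of the
standard normal law.
-/

section Kummer

lemma ascFact_pos {a : ℝ} (ha : 0 < a) (k : ℕ) : 0 < ascFact a k :=
  Finset.prod_pos fun _ _ => by positivity

lemma ascFact_succ_left (a : ℝ) (k : ℕ) : ascFact a (k + 1) = a * ascFact (a + 1) k := by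
  simp only [ascFact, Finset.prod_range_succ', Nat.cast_add, Nat.cast_one, Nat.cast_zero, add_zero]
  rw [mul_comm]
  congr! 2
  ring

lemma ascFact_one (k : ℕ) : ascFact 1 k = k.factorial := by
  rw [← Finset.prod_range_add_one_eq_factorial, ascFact]
  push_cast
  exact Finset.prod_congr rfl fun _ _ => add_comm _ _

lemma Gamma_add_natCast {a : ℝ} (ha : 0 < a) (k : ℕ) :
    Real.Gamma (a + k) = ascFact a k * Real.Gamma a := by
  induction k with
  | zero => simp [ascFact]
  | succ k ih =>
    rw [Nat.cast_succ, ← add_assoc, Real.Gamma_add_one (by positivity), ih, ascFact, ascFact,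
      Finset.prod_range_succ]
    ring

lemma beta_add_natCast_left {a c : ℝ} (ha : 0 < a) (hc : 0 < c) (k : ℕ) :
    beta (a + k) c = beta a c * (ascFact a k / ascFact (a + c) k) := by
  have := ascFact_pos (add_pos ha hc) k
  have := Real.Gamma_pos_of_pos (add_pos ha hc)
  rw [beta, beta, add_right_comm, Gamma_add_natCast ha, Gamma_add_natCast (add_pos ha hc)]
  field_simp

lemma beta_one_left {c : ℝ} (hc : 0 < c) : beta 1 c = c⁻¹ := by
  have := Real.Gamma_pos_of_pos hc
  rw [beta, Real.Gamma_one, one_mul, add_comm, Real.Gamma_add_one hc.ne']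
  field_simp

lemma integral_rpow_mul_one_sub_rpow {a c : ℝ} (ha : 0 < a) (hc : 0 < c) :
    ∫ s in Set.Ioo (0 : ℝ) 1, s ^ (a - 1) * (1 - s) ^ (c - 1) = beta a c := by
  have hdensity : ∫ s in Set.Ioo (0 : ℝ) 1, 1 / beta a c * s ^ (a - 1) * (1 - s) ^ (c - 1) = 1 := by
    rw [integral_eq_lintegral_of_nonneg_ae, ← lintegral_betaPDF, lintegral_betaPDF_eq_one ha hc,
      ENNReal.toReal_one]
    · refine ae_restrict_of_forall_mem measurableSet_Ioo fun s ⟨h0, h1⟩ => ?_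
      have := beta_pos ha hc
      have := sub_pos.2 h1
      simp only [Pi.zero_apply]
      positivity
    · exact Measurable.aestronglyMeasurable (by fun_prop)
  simp_rw [mul_assoc, integral_const_mul] at hdensity
  rwa [one_div_mul_eq_div, div_eq_one_iff_eq (beta_pos ha hc).ne'] at hdensity

lemma integrableOn_rpow_mul_one_sub_rpow {a c : ℝ} (ha : 0 < a) (hc : 0 < c) :
    IntegrableOn (fun s : ℝ => s ^ (a - 1) * (1 - s) ^ (c - 1)) (Set.Ioo 0 1) :=
  not_imp_comm.1 integral_undef <|
    (integral_rpow_mul_one_sub_rpow ha hc).trans_ne (beta_pos ha hc).ne'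

lemma integral_rpow_mul_one_sub_rpow_mul_pow {a c : ℝ} (ha : 0 < a) (hc : 0 < c) (k : ℕ) :
    ∫ s in Set.Ioo (0 : ℝ) 1, s ^ (a - 1) * (1 - s) ^ (c - 1) * s ^ k =
      beta a c * (ascFact a k / ascFact (a + c) k) := by
  rw [← beta_add_natCast_left ha hc, ← integral_rpow_mul_one_sub_rpow (by positivity) hc]
  refine setIntegral_congr_fun measurableSet_Ioo fun s hs => ?_
  rw [add_sub_right_comm, Real.rpow_add hs.1, Real.rpow_natCast]
  ring

lemma integrableOn_rpow_mul_one_sub_rpow_mul_exp {a c : ℝ} (ha : 0 < a) (hc : 0 < c) (z : ℝ) :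
    IntegrableOn (fun s : ℝ => s ^ (a - 1) * (1 - s) ^ (c - 1) * Real.exp (z * s))
      (Set.Ioo 0 1) := by
  refine (integrableOn_rpow_mul_one_sub_rpow ha hc).mul_bdd (c := Real.exp |z|)
    (Measurable.aestronglyMeasurable (by fun_prop)) ?_
  refine ae_restrict_of_forall_mem measurableSet_Ioo fun s ⟨h0, h1⟩ => ?_
  rw [Real.norm_of_nonneg (Real.exp_nonneg _), Real.exp_le_exp]
  calc z * s ≤ |z| * s := by gcongr; exact le_abs_self z
    _ ≤ |z| := mul_le_of_le_one_right (abs_nonneg z) h1.le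

lemma hasSum_pow_div_factorial (y : ℝ) :
    HasSum (fun k : ℕ => y ^ k / k.factorial) (Real.exp y) := by
  rw [Real.exp_eq_exp_ℝ]
  exact NormedSpace.expSeries_div_hasSum_exp y

lemma hasSum_integral_rpow_mul_one_sub_rpow_mul_exp {a c : ℝ} (ha : 0 < a) (hc : 0 < c) (z : ℝ) :
    HasSum (fun k : ℕ => beta a c * (ascFact a k / ascFact (a + c) k * z ^ k / k.factorial))
      (∫ s in Set.Ioo (0 : ℝ) 1, s ^ (a - 1) * (1 - s) ^ (c - 1) * Real.exp (z * s)) := by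
  have hterm (k : ℕ) : beta a c * (ascFact a k / ascFact (a + c) k * z ^ k / k.factorial) =
      ∫ s in Set.Ioo (0 : ℝ) 1,
        s ^ (a - 1) * (1 - s) ^ (c - 1) * ((z * s) ^ k / k.factorial) := by
    rw [mul_div_assoc, ← mul_assoc, ← integral_rpow_mul_one_sub_rpow_mul_pow ha hc,
      ← integral_mul_const]
    congr! 2
    ring
  simp_rw [hterm]
  refine hasSum_integral_of_dominated_convergence
    (fun k s => s ^ (a - 1) * (1 - s) ^ (c - 1) * (|z| ^ k / k.factorial))
    (fun k => Measurable.aestronglyMeasurable (by fun_prop)) (fun k => ?_)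
    (ae_of_all _ fun s => (hasSum_pow_div_factorial |z|).summable.mul_left _) ?_
    (ae_of_all _ fun s => (hasSum_pow_div_factorial (z * s)).mul_left _)
  · refine ae_restrict_of_forall_mem measurableSet_Ioo fun s ⟨h0, h1⟩ => ?_
    have hker : 0 ≤ s ^ (a - 1) * (1 - s) ^ (c - 1) := by
      have := sub_pos.2 h1
      positivity
    have hzs : |z * s| ≤ |z| := by
      rw [abs_mul, abs_of_pos h0]
      exact mul_le_of_le_one_right (abs_nonneg z) h1.le
    rw [norm_mul, Real.norm_of_nonneg hker, norm_div, norm_pow, Real.norm_eq_abs,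
      Real.norm_natCast]
    gcongr
  · simp_rw [tsum_mul_left]
    exact (integrableOn_rpow_mul_one_sub_rpow ha hc).mul_const _

lemma hasSum_kummerM {a c : ℝ} (ha : 0 < a) (hc : 0 < c) (z : ℝ) :
    HasSum (fun k : ℕ => ascFact a k / ascFact (a + c) k * z ^ k / k.factorial)
      (kummerM a (a + c) z) :=
  ((summable_mul_left_iff (beta_pos ha hc).ne').1
    (hasSum_integral_rpow_mul_one_sub_rpow_mul_exp ha hc z).summable).hasSum

lemma integral_rpow_mul_one_sub_rpow_mul_exp {a c : ℝ} (ha : 0 < a) (hc : 0 < c) (z : ℝ) :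
    ∫ s in Set.Ioo (0 : ℝ) 1, s ^ (a - 1) * (1 - s) ^ (c - 1) * Real.exp (z * s) =
      beta a c * kummerM a (a + c) z :=
  (hasSum_integral_rpow_mul_one_sub_rpow_mul_exp ha hc z).unique
    ((hasSum_kummerM ha hc z).mul_left _)

lemma kummerM_one_add_one {c : ℝ} (hc : 0 < c) (z : ℝ) :
    kummerM 1 (1 + c) z = 1 + z / (1 + c) * kummerM 1 (1 + (1 + c)) z := by
  have hshift (k : ℕ) : ascFact 1 (k + 1) / ascFact (1 + c) (k + 1) * z ^ (k + 1) /
      (k + 1).factorial =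
        z / (1 + c) * (ascFact 1 k / ascFact (1 + (1 + c)) k * z ^ k / k.factorial) := by
    have := ascFact_pos (show 0 < 1 + (1 + c) by positivity) k
    rw [ascFact_succ_left (1 + c), ascFact_one, ascFact_one, add_comm (1 + c) 1,
      pow_succ]
    field_simp
  rw [kummerM, (hasSum_kummerM one_pos hc z).summable.tsum_eq_zero_add]
  simp_rw [hshift, tsum_mul_left]
  simp [kummerM, ascFact]

lemma injOn_div_one_sub : Set.InjOn (fun s : ℝ => s / (1 - s)) (Set.Ioo 0 1) := by
  intro s hs t ht h
  rw [div_eq_div_iff (sub_pos.2 hs.2).ne' (sub_pos.2 ht.2).ne'] at h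
  linarith

lemma image_div_one_sub_Ioo : (fun s : ℝ => s / (1 - s)) '' Set.Ioo 0 1 = Set.Ioi 0 := by
  refine Set.Subset.antisymm ?_ fun t (ht : 0 < t) => ⟨t / (1 + t), ⟨by positivity, ?_⟩, ?_⟩
  · rintro _ ⟨s, ⟨h0, h1⟩, rfl⟩
    exact div_pos h0 (sub_pos.2 h1)
  · rw [div_lt_one (by positivity)]
    linarith
  · field_simp
    ring

lemma hasDerivWithinAt_div_one_sub {s : ℝ} (hs : s ∈ Set.Ioo (0 : ℝ) 1) :
    HasDerivWithinAt (fun s : ℝ => s / (1 - s)) ((1 - s) ^ 2)⁻¹ (Set.Ioo 0 1) s := by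
  have hs1 : 1 - s ≠ 0 := (sub_pos.2 hs.2).ne'
  refine (((hasDerivAt_id s).div ((hasDerivAt_id s).const_sub 1) hs1).congr_deriv
    ?_).hasDerivWithinAt
  simp only [id]
  field_simp
  ring

-- The odds substitution `t = s / (1 - s)`, for which `1 + t = 1 / (1 - s)` and `t / (1 + t) = s`.
lemma odds_jacobian_smul_kernel (a c z : ℝ) {s : ℝ} (hs : s ∈ Set.Ioo (0 : ℝ) 1) :
    |((1 - s) ^ 2)⁻¹| • ((s / (1 - s)) ^ (a - 1) * (1 + s / (1 - s)) ^ (-(a + c)) *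
        Real.exp (z * (s / (1 - s) / (1 + s / (1 - s))))) =
      s ^ (a - 1) * (1 - s) ^ (c - 1) * Real.exp (z * s) := by
  have hs0 : 0 < s := hs.1
  have hs1 : 0 < 1 - s := sub_pos.2 hs.2
  have hinv : 1 + s / (1 - s) = (1 - s)⁻¹ := by field_simp; ring
  have hpow : (1 - s) ^ (c - 1) = (1 - s) ^ (a + c) / ((1 - s) ^ 2 * (1 - s) ^ (a - 1)) := by
    rw [eq_div_iff (by positivity), ← Real.rpow_natCast, ← Real.rpow_add hs1, ← Real.rpow_add hs1]
    congr 1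
    push_cast
    ring
  rw [hinv, div_inv_eq_mul, div_mul_cancel₀ _ hs1.ne', abs_of_pos (by positivity), smul_eq_mul,
    Real.div_rpow hs0.le hs1.le, Real.inv_rpow hs1.le, Real.rpow_neg hs1.le, inv_inv, hpow]
  field_simp

lemma integral_Ioi_rpow_mul_one_add_rpow_neg_mul_exp {a c : ℝ} (ha : 0 < a) (hc : 0 < c) (z : ℝ) :
    ∫ t in Set.Ioi (0 : ℝ), t ^ (a - 1) * (1 + t) ^ (-(a + c)) * Real.exp (z * (t / (1 + t))) =
      beta a c * kummerM a (a + c) z := by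
  rw [← image_div_one_sub_Ioo, integral_image_eq_integral_abs_deriv_smul measurableSet_Ioo
    (fun _ => hasDerivWithinAt_div_one_sub) injOn_div_one_sub,
    ← integral_rpow_mul_one_sub_rpow_mul_exp ha hc]
  exact setIntegral_congr_fun measurableSet_Ioo fun s => odds_jacobian_smul_kernel a c z

lemma integrableOn_Ioi_rpow_mul_one_add_rpow_neg_mul_exp {a c : ℝ} (ha : 0 < a) (hc : 0 < c)
    (z : ℝ) :
    IntegrableOn (fun t : ℝ => t ^ (a - 1) * (1 + t) ^ (-(a + c)) * Real.exp (z * (t / (1 + t))))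
      (Set.Ioi 0) := by
  rw [← image_div_one_sub_Ioo, integrableOn_image_iff_integrableOn_abs_deriv_smul measurableSet_Ioo
    (fun _ => hasDerivWithinAt_div_one_sub) injOn_div_one_sub]
  exact (integrableOn_rpow_mul_one_sub_rpow_mul_exp ha hc z).congr_fun
    (fun s hs => (odds_jacobian_smul_kernel a c z hs).symm) measurableSet_Ioo

end Kummer

section Laplace

variable {α : Type*} [MeasurableSpace α] {μ : Measure α} {φ q : α → ℝ} {a : ℝ}

lemma integrableOn_rpow_mul_exp_neg_mul_Ioi {r : ℝ} (ha : 0 < a) (hr : 0 < r) :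
    IntegrableOn (fun t : ℝ => t ^ (a - 1) * Real.exp (-(r * t))) (Set.Ioi 0) := by
  refine not_imp_comm.1 integral_undef ?_
  rw [Real.integral_rpow_mul_exp_neg_mul_Ioi ha hr]
  have := Real.Gamma_pos_of_pos ha
  positivity

lemma rpow_neg_eq_inv_Gamma_mul_integral {r : ℝ} (ha : 0 < a) (hr : 0 < r) :
    r ^ (-a) = (Real.Gamma a)⁻¹ * ∫ t in Set.Ioi (0 : ℝ), t ^ (a - 1) * Real.exp (-(r * t)) := by
  have := Real.Gamma_pos_of_pos ha
  rw [Real.integral_rpow_mul_exp_neg_mul_Ioi ha hr, one_div, Real.inv_rpow hr.le,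
    Real.rpow_neg hr.le]
  field_simp

lemma integrable_prod_mul_rpow_mul_exp_neg (hφ : AEStronglyMeasurable φ μ) (hqm : Measurable q)
    (ha : 0 < a) (hq : ∀ᵐ w ∂μ, 0 < q w) (hint : Integrable (fun w => φ w * q w ^ (-a)) μ) :
    Integrable (fun p : α × ℝ => φ p.1 * (p.2 ^ (a - 1) * Real.exp (-(q p.1 * p.2))))
      (μ.prod (volume.restrict (Set.Ioi 0))) := by
  have hmeas : AEStronglyMeasurable
      (fun p : α × ℝ => φ p.1 * (p.2 ^ (a - 1) * Real.exp (-(q p.1 * p.2))))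
      (μ.prod (volume.restrict (Set.Ioi 0))) :=
    hφ.comp_fst.mul (Measurable.aestronglyMeasurable (by fun_prop))
  rw [integrable_prod_iff hmeas]
  refine ⟨hq.mono fun w hw => (integrableOn_rpow_mul_exp_neg_mul_Ioi ha hw).const_mul (φ w),
    (hint.norm.const_mul (Real.Gamma a)).congr (hq.mono fun w hw => ?_)⟩
  have hker : ∫ t in Set.Ioi (0 : ℝ), ‖t ^ (a - 1) * Real.exp (-(q w * t))‖ =
      Real.Gamma a * q w ^ (-a) := by
    rw [rpow_neg_eq_inv_Gamma_mul_integral ha hw,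
      mul_inv_cancel_left₀ (Real.Gamma_pos_of_pos ha).ne']
    refine setIntegral_congr_fun measurableSet_Ioi fun t (ht : 0 < t) => ?_
    exact Real.norm_of_nonneg (by positivity)
  simp_rw [norm_mul (φ w), integral_const_mul, hker, Real.norm_of_nonneg (Real.rpow_nonneg hw.le _)]
  ring

lemma integral_mul_rpow_neg [SFinite μ] (hφ : AEStronglyMeasurable φ μ) (hqm : Measurable q)
    (ha : 0 < a) (hq : ∀ᵐ w ∂μ, 0 < q w) (hint : Integrable (fun w => φ w * q w ^ (-a)) μ) :
    ∫ w, φ w * q w ^ (-a) ∂μ = (Real.Gamma a)⁻¹ *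
      ∫ t in Set.Ioi (0 : ℝ), t ^ (a - 1) * ∫ w, φ w * Real.exp (-(q w * t)) ∂μ := by
  calc ∫ w, φ w * q w ^ (-a) ∂μ
      = (Real.Gamma a)⁻¹ * ∫ w, (∫ t in Set.Ioi (0 : ℝ),
          φ w * (t ^ (a - 1) * Real.exp (-(q w * t)))) ∂μ := by
        rw [← integral_const_mul]
        refine integral_congr_ae (hq.mono fun w hw => ?_)
        simp only [integral_const_mul]
        rw [rpow_neg_eq_inv_Gamma_mul_integral ha hw]
        ring
    _ = _ := by
        rw [integral_integral_swap (integrable_prod_mul_rpow_mul_exp_neg hφ hqm ha hq hint)]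
        simp_rw [← integral_const_mul, mul_left_comm]

end Laplace

section GaussianTilting

open scoped NNReal

lemma pi_tilted {ι : Type*} [Fintype ι] {X : ι → Type*} [∀ i, MeasurableSpace (X i)]
    (μ : ∀ i, Measure (X i)) [∀ i, SigmaFinite (μ i)] (f : ∀ i, X i → ℝ) :
    Measure.pi (fun i => (μ i).tilted (f i)) =
      (Measure.pi μ).tilted fun x => ∑ i, f i (x i) := by
  refine Measure.pi_eq fun s _ => ?_
  simp_rw [tilted_apply_eq_ofReal_integral, integral_div, Real.exp_sum, Measure.restrict_pi_pi]
  rw [integral_fintype_prod_eq_prod (f := fun i y => Real.exp (f i y)),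
    integral_fintype_prod_eq_prod (f := fun i y => Real.exp (f i y)), ← Finset.prod_div_distrib,
    ENNReal.ofReal_prod_of_nonneg fun i _ => by positivity]

lemma gaussianPDFReal_mul_exp_neg_sq (m : ℝ) (v t : ℝ≥0) (w : ℝ) :
    gaussianPDFReal m v w * Real.exp (-(w ^ 2 / 2 * t)) =
      (√(1 + t * v))⁻¹ * Real.exp (-(m ^ 2 / 2 * (t / (1 + t * v)))) *
        gaussianPDFReal (m / (1 + t * v)) (v / (1 + t * v)) w := by
  rcases eq_or_ne v 0 with rfl | hv
  · simp
  have : (0 : ℝ) < v := by positivity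
  have hexponent : -(w - m) ^ 2 / (2 * v) + -(w ^ 2 / 2 * t) =
      -(m ^ 2 / 2 * (t / (1 + t * v))) +
        -(w - m / (1 + t * v)) ^ 2 / (2 * (v / (1 + t * v))) := by
    field_simp
    ring
  have hscale : √(2 * Real.pi * (v / (1 + t * v))) = √(2 * Real.pi * v) * (√(1 + t * v))⁻¹ := by
    rw [← mul_div_assoc, Real.sqrt_div (by positivity), div_eq_mul_inv]
  have : 0 < √(1 + t * v : ℝ) := by positivity
  simp only [gaussianPDFReal, NNReal.coe_div, NNReal.coe_add, NNReal.coe_one, NNReal.coe_mul]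
  rw [mul_assoc, ← Real.exp_add, hexponent, Real.exp_add, hscale]
  field_simp

variable {v : ℝ≥0}

lemma integral_exp_neg_sq_gaussianReal (m : ℝ) (hv : v ≠ 0) (t : ℝ≥0) :
    ∫ w, Real.exp (-(w ^ 2 / 2 * t)) ∂gaussianReal m v =
      (√(1 + t * v))⁻¹ * Real.exp (-(m ^ 2 / 2 * (t / (1 + t * v)))) := by
  rw [integral_gaussianReal_eq_integral_smul hv]
  simp_rw [smul_eq_mul, gaussianPDFReal_mul_exp_neg_sq, integral_const_mul]
  rw [integral_gaussianPDFReal_eq_one _ (by positivity), mul_one]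

lemma gaussianReal_tilted_neg_sq (m : ℝ) (hv : v ≠ 0) (t : ℝ≥0) :
    (gaussianReal m v).tilted (fun w => -(w ^ 2 / 2 * t)) =
      gaussianReal (m / (1 + t * v)) (v / (1 + t * v)) := by
  have hv' : v / (1 + t * v) ≠ 0 := by positivity
  rw [Measure.tilted, integral_exp_neg_sq_gaussianReal m hv, gaussianReal_of_var_ne_zero _ hv,
    gaussianReal_of_var_ne_zero _ hv', ← withDensity_mul _ (by fun_prop) (by fun_prop)]
  congr 1 with w
  rw [Pi.mul_apply, gaussianPDF, gaussianPDF,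
    ← ENNReal.ofReal_mul (gaussianPDFReal_nonneg _ _ _), mul_div_assoc',
    gaussianPDFReal_mul_exp_neg_sq, mul_div_cancel_left₀ _ (by positivity)]

variable {ι : Type*} [Fintype ι]

lemma integral_mul_exp_neg_sum_sq_pi_gaussianReal (m : ι → ℝ) (hv : v ≠ 0) (t : ℝ≥0)
    (φ : (ι → ℝ) → ℝ) :
    ∫ w, φ w * Real.exp (-((∑ i, w i ^ 2) / 2 * t)) ∂Measure.pi (fun i => gaussianReal (m i) v) =
      (1 + t * v : ℝ) ^ (-(Fintype.card ι / 2 : ℝ)) *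
        Real.exp (-((∑ i, m i ^ 2) / 2 * (t / (1 + t * v)))) *
        ∫ w, φ w ∂Measure.pi fun i => gaussianReal (m i / (1 + t * v)) (v / (1 + t * v)) := by
  have hsum (x : ι → ℝ) (s : ℝ) : -((∑ i, x i ^ 2) / 2 * s) = ∑ i, -(x i ^ 2 / 2 * s) := by
    rw [Finset.sum_neg_distrib, Finset.sum_div, Finset.sum_mul]
  have hnorm : ∫ w, Real.exp (∑ i, -(w i ^ 2 / 2 * t)) ∂Measure.pi (fun i => gaussianReal (m i) v) =
      (1 + t * v : ℝ) ^ (-(Fintype.card ι / 2 : ℝ)) *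
        Real.exp (-((∑ i, m i ^ 2) / 2 * (t / (1 + t * v)))) := by
    simp_rw [Real.exp_sum]
    rw [integral_fintype_prod_eq_prod (f := fun i y => Real.exp (-(y ^ 2 / 2 * t)))]
    simp_rw [integral_exp_neg_sq_gaussianReal _ hv]
    rw [Finset.prod_mul_distrib, ← Real.exp_sum, Finset.prod_const, Finset.card_univ,
      Real.sqrt_eq_rpow, ← Real.rpow_neg (by positivity), ← Real.rpow_mul_natCast (by positivity),
      ← hsum]
    ring_nf
  simp_rw [← gaussianReal_tilted_neg_sq _ hv]
  rw [pi_tilted, integral_tilted, hnorm, ← integral_const_mul]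
  congr! 2
  rw [smul_eq_mul, ← mul_assoc, mul_div_cancel₀ _ (by positivity), mul_comm, hsum]

end GaussianTilting

section GaussianMoments

open scoped NNReal

variable {ι : Type*} [Fintype ι]

lemma integral_eval_pi_gaussianReal (m : ι → ℝ) (v : ι → ℝ≥0) (k : ι) :
    ∫ w, w k ∂Measure.pi (fun i => gaussianReal (m i) (v i)) = m k := by
  rw [integral_comp_eval (μ := fun i => gaussianReal (m i) (v i)) (f := fun y => y)
    (by fun_prop), integral_id_gaussianReal]

lemma integral_eval_mul_eval_pi_gaussianReal [DecidableEq ι] (m : ι → ℝ) (v : ι → ℝ≥0) (i j : ι) :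
    ∫ w, w i * w j ∂Measure.pi (fun i => gaussianReal (m i) (v i)) =
      m i * m j + if i = j then (v i : ℝ) else 0 := by
  rcases eq_or_ne i j with rfl | hij
  · have hvar := variance_eq_sub (memLp_id_gaussianReal (μ := m i) (v := v i) 2)
    rw [variance_id_gaussianReal] at hvar
    simp only [Pi.pow_apply, id, integral_id_gaussianReal] at hvar
    rw [integral_comp_eval (μ := fun i => gaussianReal (m i) (v i)) (f := fun y => y * y)
      (by fun_prop), if_pos rfl, hvar]
    simp_rw [sq]
    ring
  · have hind := (iIndepFun_pi (μ := fun i => gaussianReal (m i) (v i)) (X := fun _ y => y)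
      fun _ => aemeasurable_id).indepFun hij
    rw [hind.integral_fun_mul_eq_mul_integral (Measurable.aestronglyMeasurable (by fun_prop))
      (Measurable.aestronglyMeasurable (by fun_prop)), integral_eval_pi_gaussianReal,
      integral_eval_pi_gaussianReal, if_neg hij, add_zero]

lemma ae_sum_sq_pos_pi_gaussianReal [Nonempty ι] (m : ι → ℝ) {v : ι → ℝ≥0} (hv : ∀ i, v i ≠ 0) :
    ∀ᵐ w ∂Measure.pi (fun i => gaussianReal (m i) (v i)), 0 < ∑ i, w i ^ 2 := by
  obtain ⟨k⟩ := ‹Nonempty ι›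
  have := nullSingletonClass_gaussianReal (μ := m k) (hv k)
  have hk := (measurePreserving_eval (fun i => gaussianReal (m i) (v i)) k
    ).quasiMeasurePreserving.ae (p := fun y => y ≠ 0) (by simp [ae_iff])
  filter_upwards [hk] with w hw
  exact Finset.sum_pos' (fun i _ => sq_nonneg _) ⟨k, Finset.mem_univ k, by positivity⟩

end GaussianMoments

section InverseNormMoments

open scoped NNReal

variable {ι : Type*} [Fintype ι]

lemma abs_eval_le_sqrt_sum_sq (w : ι → ℝ) (k : ι) : |w k| ≤ √(∑ i, w i ^ 2) :=
  Real.abs_le_sqrt <| Finset.single_le_sum (f := fun i => w i ^ 2) (fun i _ => sq_nonneg (w i))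
    (Finset.mem_univ k)

lemma norm_inv_sqrt_sum_sq_mul_eval_le_one (w : ι → ℝ) (k : ι) :
    ‖(√(∑ i, w i ^ 2))⁻¹ * w k‖ ≤ 1 := by
  rw [norm_mul, norm_inv, Real.norm_of_nonneg (Real.sqrt_nonneg _), inv_mul_eq_div]
  exact div_le_one_of_le₀ (abs_eval_le_sqrt_sum_sq w k) (Real.sqrt_nonneg _)

lemma memLp_inv_sqrt_sum_sq_mul_eval (μ : Measure (ι → ℝ)) [IsFiniteMeasure μ] (p : ENNReal)
    (k : ι) : MemLp (fun w => (√(∑ i, w i ^ 2))⁻¹ * w k) p μ :=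
  MemLp.of_bound (Measurable.aestronglyMeasurable (by fun_prop)) 1
    (ae_of_all _ fun w => norm_inv_sqrt_sum_sq_mul_eval_le_one w k)

variable [Nonempty ι] {m : ι → ℝ}

lemma integral_mul_half_sum_sq_rpow_neg {φ : (ι → ℝ) → ℝ} {a c A B : ℝ} (hφ : Measurable φ)
    (ha : 0 < a) (hc : 0 < c) (hac : a + c = Fintype.card ι / 2 + 1)
    (hint : Integrable (fun w => φ w * ((∑ i, w i ^ 2) / 2) ^ (-a))
      (Measure.pi fun i => gaussianReal (m i) 1))
    (hmoment : ∀ t : ℝ≥0, ∫ w, φ w ∂Measure.pi (fun i => gaussianReal (m i / (1 + t)) (1 / (1 + t)))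
      = A / (1 + t) + B / (1 + t) ^ 2) :
    ∫ w, φ w * ((∑ i, w i ^ 2) / 2) ^ (-a) ∂Measure.pi (fun i => gaussianReal (m i) 1) =
      (Real.Gamma a)⁻¹ * (A * (beta a c * kummerM a (a + c) (-(∑ i, m i ^ 2) / 2)) +
        B * (beta a (1 + c) * kummerM a (a + (1 + c)) (-(∑ i, m i ^ 2) / 2))) := by
  have hc' : 0 < 1 + c := by positivity
  have hkernel : ∀ t ∈ Set.Ioi (0 : ℝ), t ^ (a - 1) *
      ∫ w, φ w * Real.exp (-((∑ i, w i ^ 2) / 2 * t)) ∂Measure.pi (fun i => gaussianReal (m i) 1) =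
      A * (t ^ (a - 1) * (1 + t) ^ (-(a + c)) *
          Real.exp (-(∑ i, m i ^ 2) / 2 * (t / (1 + t)))) +
        B * (t ^ (a - 1) * (1 + t) ^ (-(a + (1 + c))) *
          Real.exp (-(∑ i, m i ^ 2) / 2 * (t / (1 + t)))) := by
    intro t (ht : 0 < t)
    lift t to ℝ≥0 using ht.le
    have htilt := integral_mul_exp_neg_sum_sq_pi_gaussianReal m one_ne_zero t φ
    simp only [NNReal.coe_one, mul_one, hmoment] at htilt
    have hpow : (1 + t : ℝ) ^ (-(a + c)) = (1 + t : ℝ) ^ (-(Fintype.card ι / 2 : ℝ)) / (1 + t) := by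
      rw [hac, neg_add', Real.rpow_sub_one (by positivity)]
    have hpow' : (1 + t : ℝ) ^ (-(a + (1 + c))) = (1 + t : ℝ) ^ (-(a + c)) / (1 + t) := by
      rw [← Real.rpow_sub_one (by positivity), add_left_comm, neg_add_rev, sub_eq_add_neg]
    rw [htilt, hpow', hpow, neg_div, neg_mul]
    field_simp
  rw [integral_mul_rpow_neg hφ.aestronglyMeasurable (by fun_prop) ha
    ((ae_sum_sq_pos_pi_gaussianReal m fun _ => one_ne_zero).mono fun w hw => half_pos hw) hint,
    setIntegral_congr_fun measurableSet_Ioi hkernel, integral_add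
    ((integrableOn_Ioi_rpow_mul_one_add_rpow_neg_mul_exp ha hc _).const_mul A)
    ((integrableOn_Ioi_rpow_mul_one_add_rpow_neg_mul_exp ha hc' _).const_mul B),
    integral_const_mul, integral_const_mul,
    integral_Ioi_rpow_mul_one_add_rpow_neg_mul_exp ha hc,
    integral_Ioi_rpow_mul_one_add_rpow_neg_mul_exp ha hc']

lemma integral_inv_sqrt_sum_sq_mul_eval (m : ι → ℝ) (k : ι) :
    ∫ w, (√(∑ i, w i ^ 2))⁻¹ * w k ∂Measure.pi (fun i => gaussianReal (m i) 1) =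
      Real.Gamma ((Fintype.card ι + 1) / 2) / (√2 * Real.Gamma ((Fintype.card ι + 2) / 2)) *
        kummerM (1 / 2) ((Fintype.card ι + 2) / 2) (-(∑ i, m i ^ 2) / 2) * m k := by
  have hrpow (w : ι → ℝ) : w k * ((∑ i, w i ^ 2) / 2) ^ (-(1 / 2) : ℝ) =
      √2 * ((√(∑ i, w i ^ 2))⁻¹ * w k) := by
    rw [Real.rpow_neg (by positivity), ← Real.sqrt_eq_rpow, Real.sqrt_div (by positivity), inv_div]
    ring
  have hint : Integrable (fun w : ι → ℝ => w k * ((∑ i, w i ^ 2) / 2) ^ (-(1 / 2) : ℝ))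
      (Measure.pi fun i => gaussianReal (m i) 1) := by
    simp_rw [hrpow]
    exact (memLp_one_iff_integrable.1 (memLp_inv_sqrt_sum_sq_mul_eval _ 1 k)).const_mul _
  have hmain := integral_mul_half_sum_sq_rpow_neg (A := m k) (B := 0) (by fun_prop) one_half_pos
    (c := (Fintype.card ι + 1) / 2) (by positivity) (by ring) hint fun t => by
      rw [integral_eval_pi_gaussianReal (fun i => m i / (1 + t)), zero_div, add_zero]
  simp_rw [hrpow, integral_const_mul] at hmain
  rw [zero_mul, add_zero, beta,
    show (1 / 2 + (Fintype.card ι + 1) / 2 : ℝ) = (Fintype.card ι + 2) / 2 by ring] at hmain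
  have := Real.Gamma_pos_of_pos one_half_pos
  rw [← mul_right_inj' (by positivity : √2 ≠ 0), hmain]
  field_simp

lemma integral_inv_sum_sq_mul_eval_mul_eval [DecidableEq ι] (m : ι → ℝ) (i j : ι) :
    ∫ w, (∑ l, w l ^ 2)⁻¹ * (w i * w j) ∂Measure.pi (fun l => gaussianReal (m l) 1) =
      kummerM 1 (1 + Fintype.card ι / 2) (-(∑ l, m l ^ 2) / 2) / Fintype.card ι *
          (if i = j then 1 else 0) +
        kummerM 1 (1 + (1 + Fintype.card ι / 2)) (-(∑ l, m l ^ 2) / 2) / (Fintype.card ι + 2) *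
          (m i * m j) := by
  have : (0 : ℝ) < Fintype.card ι := by exact_mod_cast Fintype.card_pos
  have hrpow (w : ι → ℝ) : w i * w j * ((∑ l, w l ^ 2) / 2) ^ (-1 : ℝ) =
      2 * ((∑ l, w l ^ 2)⁻¹ * (w i * w j)) := by
    rw [Real.rpow_neg_one, inv_div]
    ring
  have hint : Integrable (fun w : ι → ℝ => w i * w j * ((∑ l, w l ^ 2) / 2) ^ (-1 : ℝ))
      (Measure.pi fun l => gaussianReal (m l) 1) := by
    have hprod := (memLp_inv_sqrt_sum_sq_mul_eval (Measure.pi fun l => gaussianReal (m l) 1) 2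
      i).integrable_mul (memLp_inv_sqrt_sum_sq_mul_eval _ 2 j)
    refine (hprod.const_mul 2).congr (ae_of_all _ fun w => ?_)
    simp only [Pi.mul_apply, hrpow]
    rw [mul_mul_mul_comm, ← mul_inv, Real.mul_self_sqrt (by positivity)]
  have hmain := integral_mul_half_sum_sq_rpow_neg (A := if i = j then 1 else 0) (B := m i * m j)
    (by fun_prop) one_pos (c := Fintype.card ι / 2) (by positivity) (by ring) hint fun t => by
      rw [integral_eval_mul_eval_pi_gaussianReal (fun l => m l / (1 + t)), div_mul_div_comm, ← sq,
        add_comm, ite_div, zero_div]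
      norm_cast
  simp_rw [hrpow, integral_const_mul] at hmain
  rw [beta_one_left (by positivity), beta_one_left (by positivity), Real.Gamma_one] at hmain
  rw [← mul_right_inj' two_ne_zero, hmain]
  field_simp
  ring

end InverseNormMoments

section RadialProjection

variable {n : ℕ}

/-- The radial projection `x ↦ x / ‖x‖` of `ℝⁿ` onto the unit sphere, extended by `0 ↦ 0`. -/
def radialProj (x : Fin n → ℝ) : Fin n → ℝ := (euclNorm x)⁻¹ • x

lemma euclNorm_smul {c : ℝ} (hc : 0 ≤ c) (x : Fin n → ℝ) : euclNorm (c • x) = c * euclNorm x := by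
  simp only [euclNorm, Pi.smul_apply, smul_eq_mul, mul_pow]
  rw [← Finset.mul_sum, Real.sqrt_mul (sq_nonneg c), Real.sqrt_sq hc]

lemma sq_euclNorm (x : Fin n → ℝ) : euclNorm x ^ 2 = ∑ i, x i ^ 2 :=
  Real.sq_sqrt (by positivity)

lemma euclNorm_smul_radialProj (x : Fin n → ℝ) : euclNorm x • radialProj x = x := by
  rcases eq_or_ne (euclNorm x) 0 with h | h
  · have hzero : x = 0 := by
      ext i
      have := abs_eval_le_sqrt_sum_sq x i
      exact abs_nonpos_iff.1 (this.trans h.le)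
    rw [h, zero_smul, hzero]
  · rw [radialProj, smul_inv_smul₀ h]

lemma radialProj_smul {c : ℝ} (hc : 0 < c) (x : Fin n → ℝ) :
    radialProj (c • x) = radialProj x := by
  rw [radialProj, radialProj, euclNorm_smul hc.le, _root_.mul_inv_rev, smul_smul,
    inv_mul_cancel_right₀ hc.ne']

lemma measurable_radialProj : Measurable (radialProj (n := n)) := by
  unfold radialProj euclNorm
  fun_prop

end RadialProjection

section Covariance

variable {Ω : Type*} [MeasurableSpace Ω] {P : Measure Ω} {n : ℕ}

lemma covMatrix_apply (X : Ω → Fin n → ℝ) (i j : Fin n) :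
    covMatrix P X i j = cov[fun ω => X ω i, fun ω => X ω j; P] := rfl

lemma covMatrix_comp {α : Type*} [MeasurableSpace α] {f : α → Fin n → ℝ} (hf : Measurable f)
    {ξ : Ω → α} (hξ : AEMeasurable ξ P) :
    covMatrix P (fun ω => f (ξ ω)) = covMatrix (P.map ξ) f := by
  ext i j
  rw [covMatrix_apply, covMatrix_apply, covariance_map_fun
    (Measurable.aestronglyMeasurable (by fun_prop))
    (Measurable.aestronglyMeasurable (by fun_prop)) hξ]

end Covariance

section StandardGaussian

variable {n : ℕ}

lemma map_mulVec_stdGaussianPi {O : Matrix (Fin n) (Fin n) ℝ} (hO : O ∈ orthogonalGroup (Fin n) ℝ) :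
    (stdGaussianPi n).map (fun x => O.mulVec x) = stdGaussianPi n := by
  have hU : toEuclideanCLM (n := Fin n) (𝕜 := ℝ) O ∈ unitary _ := Unitary.map_mem _ hO
  have hconj : (fun x => O.mulVec x) =
      WithLp.ofLp ∘ Unitary.linearIsometryEquiv ⟨_, hU⟩ ∘ WithLp.toLp 2 := rfl
  rw [hconj, ← Measure.map_map (by fun_prop) (by fun_prop),
    ← Measure.map_map (by fun_prop) (by fun_prop), stdGaussianPi, map_pi_eq_stdGaussian,
    stdGaussian_map, ← map_pi_eq_stdGaussian, Measure.map_map (by fun_prop) (by fun_prop)]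
  exact Measure.map_id

lemma map_const_add_stdGaussianPi (m : Fin n → ℝ) :
    (stdGaussianPi n).map (fun x => m + x) = Measure.pi fun i => gaussianReal (m i) 1 := by
  calc (stdGaussianPi n).map (fun x => m + x)
      = Measure.pi fun i => (gaussianReal 0 1).map (m i + ·) :=
        Measure.pi_map_pi (f := fun i x => m i + x) (by fun_prop)
    _ = _ := by simp_rw [gaussianReal_map_const_add, zero_add]

lemma inv_smul_mem_orthogonalGroup {A : Matrix (Fin n) (Fin n) ℝ} {lam : ℝ} (hlam : lam ≠ 0)
    (hA : A * Aᵀ = lam ^ 2 • (1 : Matrix (Fin n) (Fin n) ℝ)) :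
    lam⁻¹ • A ∈ orthogonalGroup (Fin n) ℝ := by
  rw [mem_orthogonalGroup_iff, transpose_smul, smul_mul_smul_comm, hA, smul_smul, ← sq,
    ← mul_pow, inv_mul_cancel₀ hlam, one_pow, one_smul]

namespace IsGaussianVec

variable {Ω : Type*} [MeasurableSpace Ω] {P : Measure Ω}
  {ξ : Ω → Fin n → ℝ} {ν : Fin n → ℝ}

lemma aemeasurable {S : Matrix (Fin n) (Fin n) ℝ} (hξ : IsGaussianVec P ξ ν S) :
    AEMeasurable ξ P := by
  obtain ⟨A, -, hlaw⟩ := hξ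
  have : IsProbabilityMeasure (stdGaussianPi n) := by
    unfold stdGaussianPi
    infer_instance
  have : IsProbabilityMeasure (P.map ξ) := by
    rw [hlaw]
    exact Measure.isProbabilityMeasure_map (Continuous.aemeasurable (by fun_prop))
  exact aemeasurable_of_map_neZero this.neZero

lemma map_inv_smul {lam : ℝ} (hlam : lam ≠ 0)
    (hξ : IsGaussianVec P ξ ν (lam ^ 2 • (1 : Matrix (Fin n) (Fin n) ℝ))) :
    P.map (fun ω => lam⁻¹ • ξ ω) = Measure.pi fun i => gaussianReal ((lam⁻¹ • ν) i) 1 := by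
  have haem := hξ.aemeasurable
  obtain ⟨A, hA, hlaw⟩ := hξ
  have hmul : Measurable fun x : Fin n → ℝ => (lam⁻¹ • A).mulVec x :=
    Continuous.measurable (by fun_prop)
  calc P.map (fun ω => lam⁻¹ • ξ ω)
      = (P.map ξ).map fun x => lam⁻¹ • x :=
        (AEMeasurable.map_map_of_aemeasurable (by fun_prop) haem).symm
    _ = (stdGaussianPi n).map ((fun x => lam⁻¹ • ν + x) ∘ fun x => (lam⁻¹ • A).mulVec x) := by
        rw [hlaw, Measure.map_map (by fun_prop) (Continuous.measurable (by fun_prop))]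
        congr 1 with x : 1
        simp only [Function.comp_apply, smul_add, smul_mulVec]
    _ = Measure.pi fun i => gaussianReal ((lam⁻¹ • ν) i) 1 := by
        rw [← Measure.map_map (by fun_prop) hmul,
          map_mulVec_stdGaussianPi (inv_smul_mem_orthogonalGroup hlam hA),
          map_const_add_stdGaussianPi]

end IsGaussianVec

end StandardGaussian

section ProjectedGaussian

variable {n : ℕ}

lemma one_sub_natCast_mul_gFun (hn : n ≠ 0) (x : ℝ) :
    1 - n * gFun n x = kummerM 1 (1 + (1 + n / 2)) (-x ^ 2 / 2) / (n + 2) * x ^ 2 := by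
  rw [gFun, add_comm (_ / 2 : ℝ) 1, kummerM_one_add_one (by positivity)]
  field_simp
  ring

lemma fFun_sub_gFun (hn : n ≠ 0) (x : ℝ) :
    fFun n x - gFun n x = 1 - n * gFun n x - varrho n x ^ 2 := by
  rw [fFun, gFun]
  field_simp
  ring

lemma fFun_zero (hn : n ≠ 0) : fFun n 0 = gFun n 0 := by
  rw [← sub_eq_zero, fFun_sub_gFun hn, one_sub_natCast_mul_gFun hn, varrho]
  ring

lemma smul_one_add_smul_vecMulVec_single {R k : Type*} [Ring R] [DecidableEq k] (a b : R)
    (i₀ : k) :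
    b • (1 : Matrix k k R) + (a - b) • vecMulVec (Pi.single i₀ 1) (Pi.single i₀ 1) =
      diagonal fun i => if i = i₀ then a else b := by
  rw [← single_eq_single_vecMulVec_single, ← diagonal_single, smul_one_eq_diagonal,
    ← diagonal_smul, diagonal_add]
  congr 1 with i
  rcases eq_or_ne i i₀ with rfl | hi
  · simp
  · simp [hi]

lemma radialProj_eq_single {ν : Fin n → ℝ} {i₀ : Fin n}
    (hν : ν = fun i => if i = i₀ then euclNorm ν else 0) (h0 : euclNorm ν ≠ 0) :
    radialProj ν = Pi.single i₀ 1 := by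
  ext i
  rw [radialProj, Pi.smul_apply, congrFun hν i, smul_eq_mul, mul_ite, mul_zero,
    inv_mul_cancel₀ h0, Pi.single_apply]

lemma gFun_smul_one_add_smul_vecMulVec_radialProj {ν : Fin n → ℝ} {i₀ : Fin n}
    (hν : ν = fun i => if i = i₀ then euclNorm ν else 0) (lam : ℝ) :
    gFun n (euclNorm ν / lam) • (1 : Matrix (Fin n) (Fin n) ℝ) +
        (fFun n (euclNorm ν / lam) - gFun n (euclNorm ν / lam)) •
          vecMulVec (radialProj ν) (radialProj ν) =
      diagonal fun i =>
        if i = i₀ then fFun n (euclNorm ν / lam) else gFun n (euclNorm ν / lam) := by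
  rcases eq_or_ne (euclNorm ν) 0 with h0 | h0
  · simp only [h0, zero_div, fFun_zero i₀.pos.ne', sub_self, zero_smul, add_zero, ite_self,
      smul_one_eq_diagonal]
  · rw [radialProj_eq_single hν h0, smul_one_add_smul_vecMulVec_single]

variable [NeZero n] (m : Fin n → ℝ)

lemma meanVec_radialProj_pi_gaussianReal :
    meanVec (Measure.pi fun i => gaussianReal (m i) 1) radialProj =
      varrho n (euclNorm m) • radialProj m := by
  ext k
  have hk : m k = euclNorm m * radialProj m k := congrFun (euclNorm_smul_radialProj m).symm k
  calc meanVec (Measure.pi fun i => gaussianReal (m i) 1) radialProj k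
      = _ := integral_inv_sqrt_sum_sq_mul_eval m k
    _ = (varrho n (euclNorm m) • radialProj m) k := by
        rw [Fintype.card_fin, ← sq_euclNorm, hk, varrho, Pi.smul_apply, smul_eq_mul]
        ring

lemma integral_radialProj_mul_radialProj_pi_gaussianReal (i j : Fin n) :
    ∫ w, radialProj w i * radialProj w j ∂Measure.pi (fun i => gaussianReal (m i) 1) =
      gFun n (euclNorm m) * (if i = j then 1 else 0) +
        (1 - n * gFun n (euclNorm m)) * (radialProj m i * radialProj m j) := by
  have hm (k : Fin n) : m k = euclNorm m * radialProj m k :=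
    congrFun (euclNorm_smul_radialProj m).symm k
  have hw (w : Fin n → ℝ) :
      radialProj w i * radialProj w j = (∑ l, w l ^ 2)⁻¹ * (w i * w j) := by
    rw [← sq_euclNorm, radialProj, Pi.smul_apply, Pi.smul_apply, smul_eq_mul, smul_eq_mul]
    ring
  rw [integral_congr_ae (ae_of_all _ hw), integral_inv_sum_sq_mul_eval_mul_eval,
    Fintype.card_fin, ← sq_euclNorm, one_sub_natCast_mul_gFun (NeZero.ne n), hm i, hm j, gFun,
    add_comm (_ / 2 : ℝ) 1]
  ring

lemma covMatrix_radialProj_pi_gaussianReal :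
    covMatrix (Measure.pi fun i => gaussianReal (m i) 1) radialProj =
      gFun n (euclNorm m) • (1 : Matrix (Fin n) (Fin n) ℝ) +
        (fFun n (euclNorm m) - gFun n (euclNorm m)) •
          vecMulVec (radialProj m) (radialProj m) := by
  ext i j
  have hmean (k : Fin n) :
      ∫ w, radialProj w k ∂Measure.pi (fun i => gaussianReal (m i) 1) =
        varrho n (euclNorm m) * radialProj m k :=
    congrFun (meanVec_radialProj_pi_gaussianReal m) k
  have hmemLp (k : Fin n) :
      MemLp (fun w => radialProj w k) 2 (Measure.pi fun i => gaussianReal (m i) 1) :=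
    memLp_inv_sqrt_sum_sq_mul_eval _ 2 k
  rw [covMatrix_apply, covariance_eq_sub (hmemLp i) (hmemLp j), hmean, hmean]
  simp only [Pi.mul_apply, integral_radialProj_mul_radialProj_pi_gaussianReal,
    fFun_sub_gFun (NeZero.ne n), Matrix.add_apply, Matrix.smul_apply, one_apply, vecMulVec_apply,
    smul_eq_mul]
  ring

theorem stmt12_general {Ω : Type*} [MeasurableSpace Ω] (P : Measure Ω) {lam : ℝ} (hlam : 0 < lam)
    (ν : Fin n → ℝ) (ξ : Ω → Fin n → ℝ)
    (hgauss : IsGaussianVec P ξ ν (lam ^ 2 • (1 : Matrix (Fin n) (Fin n) ℝ))) :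
    covMatrix P (fun ω => radialProj (ξ ω)) =
      gFun n (euclNorm ν / lam) • (1 : Matrix (Fin n) (Fin n) ℝ) +
        (fFun n (euclNorm ν / lam) - gFun n (euclNorm ν / lam)) •
          vecMulVec (radialProj ν) (radialProj ν) := by
  have hlam' : 0 < lam⁻¹ := inv_pos.2 hlam
  have haem : AEMeasurable (fun ω => lam⁻¹ • ξ ω) P := hgauss.aemeasurable.const_smul lam⁻¹
  calc covMatrix P (fun ω => radialProj (ξ ω))
      = covMatrix P (fun ω => radialProj (lam⁻¹ • ξ ω)) := by simp_rw [radialProj_smul hlam']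
    _ = covMatrix (Measure.pi fun i => gaussianReal ((lam⁻¹ • ν) i) 1) radialProj := by
        rw [covMatrix_comp measurable_radialProj haem, hgauss.map_inv_smul hlam.ne']
    _ = _ := by
        rw [covMatrix_radialProj_pi_gaussianReal, radialProj_smul hlam', euclNorm_smul hlam'.le,
          inv_mul_eq_div]

end ProjectedGaussian

/-- covariance matrix of the projected homoscedastic normal. -/
theorem stmt12 {Ω : Type*} [MeasurableSpace Ω] (P : Measure Ω) [IsProbabilityMeasure P]
    {n : ℕ} (hn : 2 ≤ n) (lam : ℝ) (hlam : 0 < lam) (ν : Fin n → ℝ)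
    (hν : ν = fun i => if i = ⟨0, by omega⟩ then euclNorm ν else 0)
    (ξ : Ω → Fin n → ℝ)
    (hgauss : IsGaussianVec P ξ ν (lam ^ 2 • (1 : Matrix (Fin n) (Fin n) ℝ))) :
    covMatrix P (fun ω => (euclNorm (ξ ω))⁻¹ • ξ ω) =
      Matrix.diagonal (fun i =>
        if i = (⟨0, by omega⟩ : Fin n) then fFun n (euclNorm ν / lam)
        else gFun n (euclNorm ν / lam)) := by
  have : NeZero n := ⟨by omega⟩
  exact (stmt12_general P hlam ν ξ hgauss).trans
    (gFun_smul_one_add_smul_vecMulVec_radialProj hν lam)
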